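/- The Albuquerque–Rezende conjecture is false: for m = 3, p_1 = 3/2, p_2 = p_3 = 3 (so γ := min{2, max{p_k : p_k ≤ 2}} = 3/2), there is no constant B > 0 such that every unimodular trilinear form A : ℓ_{3/2}^{n_1} × ℓ_3^{n_2} × ℓ_3^{n_3} → 𝕂 satisfies ‖A‖ ≥ B · (n_1^{1/3} + n_2^{1/3} + n_3^{1/3}) · n_2^{1/3} · n_3^{1/3} for all positive integers n_1, n_2, n_3. Equivalently: for every B > 0 there exist positive integers n_1, n_2, n_3 and a unimodular trilinear form A : ℓ_{3/2}^{n_1} × ℓ_3^{n_2} × ℓ_3^{n_3} → 𝕂 with ‖A‖ < B · (n_1^{1/3} + n_2^{1/3} + n_3^{1/3}) · n_2^{1/3} · n_3^{1/3}. -/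

import Mathlib

open scoped BigOperators ENNReal

noncomputable section

/-- The `ℓ_p` norm on `𝕂^n`, for `p ∈ [1, ∞]` (sup norm when `p = ∞`). -/
def lpNorm {𝕂 : Type*} [RCLike 𝕂] (p : ℝ≥0∞) {n : ℕ} (x : Fin n → 𝕂) : ℝ :=
  if p = ∞ then ⨆ j, ‖x j‖ else (∑ j, ‖x j‖ ^ p.toReal) ^ (1 / p.toReal)

/-- The operator norm of an `m`-linear form `A : ℓ_{p 1}^{n 1} × ⋯ × ℓ_{p m}^{n m} → 𝕂`,
i.e. the supremum of `‖A x‖` over all `x` with `‖x k‖_{p k} ≤ 1` for every `k`. -/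
def opNorm {𝕂 : Type*} [RCLike 𝕂] {m : ℕ} {n : Fin m → ℕ} (p : Fin m → ℝ≥0∞)
    (A : MultilinearMap 𝕂 (fun k => Fin (n k) → 𝕂) 𝕂) : ℝ :=
  sSup {t | ∃ x : ∀ k, Fin (n k) → 𝕂, (∀ k, lpNorm (p k) (x k) ≤ 1) ∧ t = ‖A x‖}

/-- A multilinear form is unimodular if all its coefficients `A (e_{j 1}, …, e_{j m})`
have modulus 1. -/
def Unimodular {𝕂 : Type*} [RCLike 𝕂] {m : ℕ} {n : Fin m → ℕ}
    (A : MultilinearMap 𝕂 (fun k => Fin (n k) → 𝕂) 𝕂) : Prop :=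
  ∀ j : ∀ k, Fin (n k), ‖A (fun k => Pi.single (j k) 1)‖ = 1

/-- The `m`-linear form `z ↦ ∑_j c j • z^{(1)}_{j 1} ⋯ z^{(m)}_{j m}` determined by the
coefficients `c`. -/
def coeffForm {𝕂 : Type*} [RCLike 𝕂] {m : ℕ} {n : Fin m → ℕ} (c : (∀ k, Fin (n k)) → 𝕂) :
    MultilinearMap 𝕂 (fun k => Fin (n k) → 𝕂) 𝕂 :=
  ∑ j : ∀ k, Fin (n k), (MultilinearMap.mkPiRing 𝕂 (Fin m) (c j)).compLinearMap
    fun k => LinearMap.proj (j k)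

/-- The conjugate exponent `p*` of `p ∈ [1,∞]`, defined by `1/p + 1/p* = 1`. -/
def conjExp (p : ℝ≥0∞) : ℝ≥0∞ := (1 - 1/p)⁻¹

/-!
Take `n₁ = 2 ^ n`, `n₂ = n`, `n₃ = 1`, and let the `2 ^ n` slices of `A` in the first variable run
over all sign vectors `ε ∈ {±1} ^ n`. By Hölder, `‖A‖` is at most the norm of
`y ↦ (∑ j, ε j * y j)_ε` from `ℓ_3^n` to `ℓ_3^{2 ^ n}`. Khintchine's inequality bounds the image of
`y` by a constant times `2 ^ (n / 3) * ‖y‖_2 ≤ 2 ^ (n / 3) * n ^ (1 / 6) * ‖y‖_3`, whereas the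
conjectured lower bound is at least `B * 2 ^ (n / 3) * n ^ (1 / 3)`.
-/

open Finset

section Khintchine

variable {ι E : Type*} [Fintype ι] [DecidableEq ι]

theorem expect_sum_insert_units_smul [AddCommGroup E] (f : E → ℝ) (y : ι → E)
    {s : Finset ι} {a : ι} (ha : a ∉ s) :
    𝔼 ε : ι → ℤˣ, f (∑ j ∈ insert a s, ε j • y j) =
      𝔼 ε : ι → ℤˣ, (f (∑ j ∈ s, ε j • y j + y a) + f (∑ j ∈ s, ε j • y j - y a)) / 2 := by
  let flip : (ι → ℤˣ) ≃ (ι → ℤˣ) := Equiv.mulLeft (Pi.mulSingle a (-1))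
  have flip_at (ε : ι → ℤˣ) : flip ε a = -ε a := by simp [flip]
  have flip_off (ε : ι → ℤˣ) : ∑ j ∈ s, flip ε j • y j = ∑ j ∈ s, ε j • y j :=
    sum_congr rfl fun j hj => by simp [flip, Pi.mulSingle_eq_of_ne (ne_of_mem_of_not_mem hj ha)]
  have pair (ε : ι → ℤˣ) :
      f (∑ j ∈ insert a s, ε j • y j) + f (∑ j ∈ insert a s, flip ε j • y j) =
        f (∑ j ∈ s, ε j • y j + y a) + f (∑ j ∈ s, ε j • y j - y a) := by
    rw [sum_insert ha, sum_insert ha, flip_off, flip_at]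
    obtain h | h := Int.units_eq_one_or (ε a) <;> simp [h, ← sub_eq_neg_add, add_comm]
  have flip_expect : 𝔼 ε : ι → ℤˣ, f (∑ j ∈ insert a s, flip ε j • y j) =
      𝔼 ε : ι → ℤˣ, f (∑ j ∈ insert a s, ε j • y j) :=
    Fintype.expect_equiv flip _ _ fun _ => rfl
  rw [← expect_div, ← expect_congr rfl fun ε _ => pair ε, expect_add_distrib, flip_expect,
    add_self_div_two]

variable [NormedAddCommGroup E] [InnerProductSpace ℝ E]

theorem norm_add_pow_four_add_norm_sub_pow_four_le (x y : E) :
    ‖x + y‖ ^ 4 + ‖x - y‖ ^ 4 ≤ 2 * (‖x‖ ^ 4 + 6 * ‖x‖ ^ 2 * ‖y‖ ^ 2 + ‖y‖ ^ 4) := by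
  have inner_sq_le : inner ℝ x y ^ 2 ≤ (‖x‖ * ‖y‖) ^ 2 :=
    sq_le_sq.2 ((abs_real_inner_le_norm x y).trans (le_abs_self _))
  calc ‖x + y‖ ^ 4 + ‖x - y‖ ^ 4
      = (‖x + y‖ ^ 2) ^ 2 + (‖x - y‖ ^ 2) ^ 2 := by ring
    _ = 2 * (‖x‖ ^ 2 + ‖y‖ ^ 2) ^ 2 + 8 * inner ℝ x y ^ 2 := by
        rw [norm_add_sq_real, norm_sub_sq_real]; ring
    _ ≤ 2 * (‖x‖ ^ 2 + ‖y‖ ^ 2) ^ 2 + 8 * (‖x‖ * ‖y‖) ^ 2 := by gcongr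
    _ = 2 * (‖x‖ ^ 4 + 6 * ‖x‖ ^ 2 * ‖y‖ ^ 2 + ‖y‖ ^ 4) := by ring

theorem expect_norm_sum_units_smul_sq (s : Finset ι) (y : ι → E) :
    𝔼 ε : ι → ℤˣ, ‖∑ j ∈ s, ε j • y j‖ ^ 2 = ∑ j ∈ s, ‖y j‖ ^ 2 := by
  induction s using Finset.induction with
  | empty => simp
  | insert a s ha ih =>
    have parallelogram (x : E) : (‖x + y a‖ ^ 2 + ‖x - y a‖ ^ 2) / 2 = ‖x‖ ^ 2 + ‖y a‖ ^ 2 := by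
      linarith [parallelogram_law_with_norm ℝ x (y a)]
    rw [expect_sum_insert_units_smul (‖·‖ ^ 2) y ha]
    simp only [parallelogram, expect_add_distrib, Fintype.expect_const, ih, sum_insert ha]
    exact add_comm _ _

theorem expect_norm_sum_units_smul_pow_four_le (s : Finset ι) (y : ι → E) :
    𝔼 ε : ι → ℤˣ, ‖∑ j ∈ s, ε j • y j‖ ^ 4 ≤ 3 * (∑ j ∈ s, ‖y j‖ ^ 2) ^ 2 := by
  induction s using Finset.induction with
  | empty => simp
  | insert a s ha ih =>
    calc 𝔼 ε : ι → ℤˣ, ‖∑ j ∈ insert a s, ε j • y j‖ ^ 4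
        = 𝔼 ε : ι → ℤˣ,
            (‖∑ j ∈ s, ε j • y j + y a‖ ^ 4 + ‖∑ j ∈ s, ε j • y j - y a‖ ^ 4) / 2 :=
          expect_sum_insert_units_smul (‖·‖ ^ 4) y ha
      _ ≤ 𝔼 ε : ι → ℤˣ, (‖∑ j ∈ s, ε j • y j‖ ^ 4
            + 6 * ‖∑ j ∈ s, ε j • y j‖ ^ 2 * ‖y a‖ ^ 2 + ‖y a‖ ^ 4) :=
          expect_le_expect fun ε _ => by
            linarith [norm_add_pow_four_add_norm_sub_pow_four_le (∑ j ∈ s, ε j • y j) (y a)]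
      _ = 𝔼 ε : ι → ℤˣ, ‖∑ j ∈ s, ε j • y j‖ ^ 4
            + 6 * (∑ j ∈ s, ‖y j‖ ^ 2) * ‖y a‖ ^ 2 + ‖y a‖ ^ 4 := by
          rw [expect_add_distrib, expect_add_distrib, ← expect_mul, ← mul_expect,
            expect_norm_sum_units_smul_sq, Fintype.expect_const]
      _ ≤ 3 * (∑ j ∈ s, ‖y j‖ ^ 2) ^ 2
            + 6 * (∑ j ∈ s, ‖y j‖ ^ 2) * ‖y a‖ ^ 2 + 3 * ‖y a‖ ^ 4 := by
          gcongr
          exact le_mul_of_one_le_left (by positivity) (by norm_num)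
      _ = 3 * (∑ j ∈ insert a s, ‖y j‖ ^ 2) ^ 2 := by rw [sum_insert ha]; ring

theorem expect_norm_sum_units_smul_pow_three_sq_le (s : Finset ι) (y : ι → E) :
    (𝔼 ε : ι → ℤˣ, ‖∑ j ∈ s, ε j • y j‖ ^ 3) ^ 2 ≤ 3 * (∑ j ∈ s, ‖y j‖ ^ 2) ^ 3 := by
  let S (ε : ι → ℤˣ) : ℝ := ‖∑ j ∈ s, ε j • y j‖
  calc (𝔼 ε, S ε ^ 3) ^ 2
      = (𝔼 ε, S ε * S ε ^ 2) ^ 2 := by simp only [pow_succ' _ 2]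
    _ ≤ (𝔼 ε, S ε ^ 2) * 𝔼 ε, (S ε ^ 2) ^ 2 := expect_mul_sq_le_sq_mul_sq _ _ _
    _ = (∑ j ∈ s, ‖y j‖ ^ 2) * 𝔼 ε, S ε ^ 4 := by
        simp only [← pow_mul, S, expect_norm_sum_units_smul_sq]
    _ ≤ (∑ j ∈ s, ‖y j‖ ^ 2) * (3 * (∑ j ∈ s, ‖y j‖ ^ 2) ^ 2) := by
        gcongr
        exact expect_norm_sum_units_smul_pow_four_le s y
    _ = 3 * (∑ j ∈ s, ‖y j‖ ^ 2) ^ 3 := by ring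

end Khintchine

theorem sum_sq_pow_three_le_card_mul_sum_pow_three_sq {ι : Type*} (s : Finset ι) {f : ι → ℝ}
    (hf : ∀ i ∈ s, 0 ≤ f i) :
    (∑ i ∈ s, f i ^ 2) ^ 3 ≤ #s * (∑ i ∈ s, f i ^ 3) ^ 2 := by
  have sum_nonneg_pow (k : ℕ) : 0 ≤ ∑ i ∈ s, f i ^ k :=
    sum_nonneg fun i hi => pow_nonneg (hf i hi) k
  have sum_sq_sq_le : (∑ i ∈ s, f i ^ 2) ^ 2 ≤ (∑ i ∈ s, f i) * ∑ i ∈ s, f i ^ 3 :=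
    sum_sq_le_sum_mul_sum_of_sq_le_mul s hf (fun i hi => pow_nonneg (hf i hi) 3) fun i _ =>
      le_of_eq (by ring)
  obtain sum_sq_zero | sum_sq_pos := (sum_nonneg_pow 2).eq_or_lt
  · rw [← sum_sq_zero, zero_pow three_ne_zero]
    positivity
  refine le_of_mul_le_mul_right ?_ sum_sq_pos
  calc (∑ i ∈ s, f i ^ 2) ^ 3 * ∑ i ∈ s, f i ^ 2
      = ((∑ i ∈ s, f i ^ 2) ^ 2) ^ 2 := by ring
    _ ≤ ((∑ i ∈ s, f i) * ∑ i ∈ s, f i ^ 3) ^ 2 := by gcongr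
    _ = (∑ i ∈ s, f i) ^ 2 * (∑ i ∈ s, f i ^ 3) ^ 2 := mul_pow ..
    _ ≤ (#s * ∑ i ∈ s, f i ^ 2) * (∑ i ∈ s, f i ^ 3) ^ 2 := by
        gcongr
        exact sq_sum_le_card_mul_sum_sq
    _ = #s * (∑ i ∈ s, f i ^ 3) ^ 2 * ∑ i ∈ s, f i ^ 2 := by ring

section Forms

variable {𝕂 : Type*} [RCLike 𝕂]

section LpNorm

variable {n : ℕ}

theorem lpNorm_nonneg (p : ℝ≥0∞) (x : Fin n → 𝕂) : 0 ≤ lpNorm p x := by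
  rw [lpNorm]
  split_ifs
  · exact Real.iSup_nonneg fun j => norm_nonneg _
  · positivity

theorem lpNorm_natCast_pow {k : ℕ} (hk : k ≠ 0) (x : Fin n → 𝕂) :
    lpNorm k x ^ k = ∑ j, ‖x j‖ ^ k := by
  simp only [lpNorm, ENNReal.natCast_ne_top, if_false, ENNReal.toReal_natCast, Real.rpow_natCast,
    one_div]
  exact Real.rpow_inv_natCast_pow (by positivity) hk

theorem lpNorm_fin_one {p : ℝ≥0∞} (hp : p ≠ 0) (x : Fin 1 → 𝕂) : lpNorm p x = ‖x 0‖ := by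
  by_cases hp_top : p = ∞
  · simp [lpNorm, hp_top]
  · simp only [lpNorm, hp_top, if_false, Fin.sum_univ_one, one_div]
    exact Real.rpow_rpow_inv (norm_nonneg _) (ENNReal.toReal_ne_zero.2 ⟨hp, hp_top⟩)

theorem norm_sum_mul_le_lpNorm_mul_lpNorm {p q : ℝ≥0∞} (hpq : p.toReal.HolderConjugate q.toReal)
    (x y : Fin n → 𝕂) : ‖∑ j, x j * y j‖ ≤ lpNorm p x * lpNorm q y := by
  have hp : p ≠ ∞ := (ENNReal.toReal_ne_zero.1 hpq.ne_zero).2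
  have hq : q ≠ ∞ := (ENNReal.toReal_ne_zero.1 hpq.symm.ne_zero).2
  calc ‖∑ j, x j * y j‖
      ≤ ∑ j, ‖x j‖ * ‖y j‖ := by simpa only [norm_mul] using norm_sum_le univ fun j => x j * y j
    _ ≤ lpNorm p x * lpNorm q y := by
        rw [lpNorm, lpNorm, if_neg hp, if_neg hq]
        exact Real.inner_le_Lp_mul_Lq_of_nonneg univ hpq (fun _ _ => norm_nonneg _)
          fun _ _ => norm_nonneg _

theorem lpNorm_three_sum_units_smul_pow_six_le {N : ℕ} (e : Fin N ≃ (Fin n → ℤˣ))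
    (y : Fin n → 𝕂) :
    lpNorm 3 (fun i => ∑ j, e i j • y j) ^ 6 ≤ 3 * N ^ 2 * n * lpNorm 3 y ^ 6 := by
  have lpNorm_three_pow_six {k : ℕ} (z : Fin k → 𝕂) : lpNorm 3 z ^ 6 = (∑ j, ‖z j‖ ^ 3) ^ 2 := by
    rw [← lpNorm_natCast_pow three_ne_zero, ← pow_mul]
    rfl
  have sum_eq_expect : ∑ i, ‖∑ j, e i j • y j‖ ^ 3 =
      N * 𝔼 ε : Fin n → ℤˣ, ‖∑ j, ε j • y j‖ ^ 3 := by
    rw [← Fintype.expect_equiv e _ (fun ε : Fin n → ℤˣ => ‖∑ j, ε j • y j‖ ^ 3) fun _ => rfl,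
      ← Fintype.card_mul_expect, Fintype.card_fin]
  calc lpNorm 3 (fun i => ∑ j, e i j • y j) ^ 6
      = N ^ 2 * (𝔼 ε : Fin n → ℤˣ, ‖∑ j, ε j • y j‖ ^ 3) ^ 2 := by
        rw [lpNorm_three_pow_six, sum_eq_expect, mul_pow]
    _ ≤ N ^ 2 * (3 * (∑ j, ‖y j‖ ^ 2) ^ 3) := by
        gcongr
        exact expect_norm_sum_units_smul_pow_three_sq_le univ y
    _ ≤ N ^ 2 * (3 * (n * (∑ j, ‖y j‖ ^ 3) ^ 2)) := by
        gcongr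
        simpa using sum_sq_pow_three_le_card_mul_sum_pow_three_sq univ
          (f := fun j => ‖y j‖) fun _ _ => norm_nonneg _
    _ = 3 * N ^ 2 * n * lpNorm 3 y ^ 6 := by rw [lpNorm_three_pow_six]; ring

end LpNorm

section MultilinearForm

variable {m : ℕ} {n : Fin m → ℕ}

theorem opNorm_le_of_forall_norm_le {p : Fin m → ℝ≥0∞}
    {A : MultilinearMap 𝕂 (fun k => Fin (n k) → 𝕂) 𝕂} {C : ℝ} (hC : 0 ≤ C)
    (hA : ∀ x, ‖A x‖ ≤ C * ∏ k, lpNorm (p k) (x k)) : opNorm p A ≤ C := by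
  refine Real.sSup_le ?_ hC
  rintro _ ⟨x, hx, rfl⟩
  exact (hA x).trans <| mul_le_of_le_one_right hC <|
    prod_le_one (fun k _ => lpNorm_nonneg _ _) fun k _ => hx k

theorem coeffForm_apply (c : (∀ k, Fin (n k)) → 𝕂) (x : ∀ k, Fin (n k) → 𝕂) :
    coeffForm c x = ∑ j, c j * ∏ k, x k (j k) := by
  simp [coeffForm, mul_comm]

theorem coeffForm_single (c : (∀ k, Fin (n k)) → 𝕂) (j : ∀ k, Fin (n k)) :
    coeffForm c (fun k => Pi.single (j k) 1) = c j := by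
  have prod_single (i : ∀ k, Fin (n k)) :
      ∏ k, (Pi.single (j k) 1 : Fin (n k) → 𝕂) (i k) = if i = j then 1 else 0 := by
    simp [Pi.single_apply, Fintype.prod_boole, funext_iff]
  simp [coeffForm_apply, prod_single]

theorem unimodular_coeffForm {c : (∀ k, Fin (n k)) → 𝕂} (hc : ∀ j, ‖c j‖ = 1) :
    Unimodular (coeffForm c) := fun j => by
  rw [coeffForm_single, hc]

end MultilinearForm

theorem sum_pi_fin_succ {M : Type*} [AddCommMonoid M] {m : ℕ} {α : Fin (m + 1) → Type*}
    [∀ k, Fintype (α k)] (f : (∀ k, α k) → M) :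
    ∑ j, f j = ∑ i, ∑ j, f (Fin.cons i j) := by
  rw [← (Fin.consEquiv α).sum_comp, Fintype.sum_prod_type]
  rfl

theorem coeffForm_apply_three {n₁ n₂ n₃ : ℕ} (c : Fin n₁ → Fin n₂ → Fin n₃ → 𝕂)
    (x : ∀ k : Fin 3, Fin (![n₁, n₂, n₃] k) → 𝕂) :
    coeffForm (fun j => c (j 0) (j 1) (j 2)) x =
      ∑ i : Fin n₁, ∑ j : Fin n₂, ∑ k : Fin n₃, c i j k * (x 0 i * x 1 j * x 2 k) := by
  simp only [coeffForm_apply, sum_pi_fin_succ, Fintype.sum_unique, Fin.prod_univ_three]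
  rfl

theorem rpow_one_sixth_pow_six {z : ℝ} (hz : 0 ≤ z) : (z ^ (1 / 6 : ℝ)) ^ 6 = z := by
  rw [one_div]
  exact_mod_cast Real.rpow_inv_natCast_pow hz (n := 6) (by norm_num)

section SignForm

variable {n N : ℕ}

variable (𝕂) in
/-- The trilinear form `∑ i j, e i j * x i * y j * z 0` on `𝕂^N × 𝕂^n × 𝕂`, whose `N` slices in the
first variable are the sign vectors enumerated by `e`. -/
def signForm (e : Fin N → Fin n → ℤˣ) :
    MultilinearMap 𝕂 (fun k : Fin 3 => Fin (![N, n, 1] k) → 𝕂) 𝕂 :=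
  coeffForm fun j => e (j 0) (j 1) • 1

theorem unimodular_signForm (e : Fin N → Fin n → ℤˣ) : Unimodular (signForm 𝕂 e) :=
  unimodular_coeffForm fun j => by rw [norm_units_zsmul, norm_one]

theorem signForm_apply (e : Fin N → Fin n → ℤˣ)
    (x : ∀ k : Fin 3, Fin (![N, n, 1] k) → 𝕂) :
    signForm 𝕂 e x = (∑ i : Fin N, x 0 i * ∑ j : Fin n, e i j • x 1 j) * x 2 (0 : Fin 1) := by
  rw [signForm, coeffForm_apply_three fun i j _ => e i j • 1]
  simp only [Fin.sum_univ_one, sum_mul, mul_sum, smul_mul_assoc, mul_smul_comm, one_mul]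

theorem opNorm_signForm_le (e : Fin N ≃ (Fin n → ℤˣ)) :
    opNorm ![3 / 2, 3, 3] (signForm 𝕂 e) ≤ (3 * N ^ 2 * n : ℝ) ^ (1 / 6 : ℝ) := by
  refine opNorm_le_of_forall_norm_le (by positivity) fun x => ?_
  let w (i : Fin N) : 𝕂 := ∑ j : Fin n, e i j • x 1 j
  have conjugate : (3 / 2 : ℝ≥0∞).toReal.HolderConjugate (3 : ℝ≥0∞).toReal := by
    norm_num [Real.holderConjugate_iff]
  have holder : ‖∑ i, x 0 i * w i‖ ≤ lpNorm (3 / 2) (x 0) * lpNorm 3 w :=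
    norm_sum_mul_le_lpNorm_mul_lpNorm conjugate (x 0) w
  have khintchine : lpNorm 3 w ≤ (3 * N ^ 2 * n : ℝ) ^ (1 / 6 : ℝ) * lpNorm 3 (x 1) := by
    refine le_of_pow_le_pow_left₀ (n := 6) (by norm_num)
      (mul_nonneg (by positivity) (lpNorm_nonneg _ _)) ?_
    rw [mul_pow, rpow_one_sixth_pow_six (by positivity)]
    exact lpNorm_three_sum_units_smul_pow_six_le e (x 1)
  have norm_last : ‖x 2 (0 : Fin 1)‖ = lpNorm 3 (x 2) :=
    (lpNorm_fin_one three_ne_zero (x 2)).symm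
  calc ‖signForm 𝕂 e x‖
      = ‖∑ i, x 0 i * w i‖ * lpNorm 3 (x 2) := by
        rw [signForm_apply, norm_mul, norm_last]
        rfl
    _ ≤ lpNorm (3 / 2) (x 0) * ((3 * N ^ 2 * n : ℝ) ^ (1 / 6 : ℝ) * lpNorm 3 (x 1))
          * lpNorm 3 (x 2) := by
        have := lpNorm_nonneg (3 / 2) (x 0)
        have := lpNorm_nonneg 3 (x 2)
        grw [holder, khintchine]
    _ = (3 * N ^ 2 * n : ℝ) ^ (1 / 6 : ℝ) * ∏ k, lpNorm (![3 / 2, 3, 3] k) (x k) := by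
        rw [Fin.prod_univ_three]
        change _ = _ * (lpNorm (3 / 2) (x 0) * lpNorm 3 (x 1) * lpNorm 3 (x 2))
        ring

end SignForm

end Forms

theorem rpow_one_sixth_lt_mul_rpow_one_third {B N n : ℝ} (hB : 0 < B) (hN : 0 < N)
    (hn : 3 / B ^ 6 < n) :
    (3 * N ^ 2 * n) ^ (1 / 6 : ℝ) < B * N ^ (1 / 3 : ℝ) * n ^ (1 / 3 : ℝ) := by
  have hn_pos : 0 < n := lt_trans (by positivity) hn
  have rpow_one_third_pow_six {z : ℝ} (hz : 0 < z) : (z ^ (1 / 3 : ℝ)) ^ 6 = z ^ 2 := by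
    rw [← Real.rpow_mul_natCast hz.le, ← Real.rpow_natCast]
    norm_num
  refine lt_of_pow_lt_pow_left₀ 6 (by positivity) ?_
  calc ((3 * N ^ 2 * n) ^ (1 / 6 : ℝ)) ^ 6
      = 3 * (N ^ 2 * n) := by
        rw [rpow_one_sixth_pow_six (by positivity), mul_assoc]
    _ < (n * B ^ 6) * (N ^ 2 * n) := by
        gcongr
        exact (div_lt_iff₀ (by positivity)).1 hn
    _ = (B * N ^ (1 / 3 : ℝ) * n ^ (1 / 3 : ℝ)) ^ 6 := by
        rw [mul_pow, mul_pow, rpow_one_third_pow_six hN, rpow_one_third_pow_six hn_pos]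
        ring

/-- **The Albuquerque–Rezende conjecture is false.** For `m = 3`, `p₁ = 3/2`,
`p₂ = p₃ = 3` (so `γ = 3/2`), there is no `B > 0` such that every unimodular trilinear
form `A : ℓ_{3/2}^{n₁} × ℓ_3^{n₂} × ℓ_3^{n₃} → 𝕂` satisfies
`‖A‖ ≥ B (n₁^{1/3} + n₂^{1/3} + n₃^{1/3}) n₂^{1/3} n₃^{1/3}`: for every `B > 0` there are
`n₁, n₂, n₃` and a unimodular trilinear form with
`‖A‖ < B (n₁^{1/3} + n₂^{1/3} + n₃^{1/3}) n₂^{1/3} n₃^{1/3}`. -/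
theorem albuquerque_rezende_conjecture_false {𝕂 : Type*} [RCLike 𝕂] :
    ∀ B : ℝ, 0 < B →
      ∃ n₁ n₂ n₃ : ℕ, 0 < n₁ ∧ 0 < n₂ ∧ 0 < n₃ ∧
        ∃ A : MultilinearMap 𝕂 (fun k : Fin 3 => Fin (![n₁, n₂, n₃] k) → 𝕂) 𝕂,
          Unimodular A ∧
            opNorm ![3 / 2, 3, 3] A <
              B * ((n₁ : ℝ) ^ ((1 : ℝ) / 3) + (n₂ : ℝ) ^ ((1 : ℝ) / 3)
                    + (n₃ : ℝ) ^ ((1 : ℝ) / 3))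
                * (n₂ : ℝ) ^ ((1 : ℝ) / 3) * (n₃ : ℝ) ^ ((1 : ℝ) / 3) := by
  intro B hB
  obtain ⟨n, hn⟩ := exists_nat_gt (3 / B ^ 6)
  have hn_pos : 0 < n := Nat.cast_pos.1 (lt_trans (by positivity) hn)
  have e : Fin (2 ^ n) ≃ (Fin n → ℤˣ) := Fintype.equivOfCardEq (by simp)
  refine ⟨2 ^ n, n, 1, by positivity, hn_pos, one_pos, signForm 𝕂 e, unimodular_signForm e, ?_⟩
  calc opNorm ![3 / 2, 3, 3] (signForm 𝕂 e)
      ≤ (3 * (2 ^ n : ℕ) ^ 2 * n : ℝ) ^ (1 / 6 : ℝ) := opNorm_signForm_le e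
    _ < B * ((2 ^ n : ℕ) : ℝ) ^ ((1 : ℝ) / 3) * (n : ℝ) ^ ((1 : ℝ) / 3) :=
        rpow_one_sixth_lt_mul_rpow_one_third hB (by positivity) hn
    _ ≤ _ := by
        rw [Nat.cast_one, Real.one_rpow, mul_one, add_assoc]
        gcongr
        exact le_add_of_nonneg_right (by positivity)
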